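/- (Jump relation for the normal derivative of the clamped-plate layer potential K₁, biharmonic part.) Let σ : ℝ → ℝ be infinitely differentiable with σ(s+L) = σ(s) for all s, and fix t ∈ ℝ. Define K(x, γ(s)) = G^B_{n_x n_y n_y n_y}(x, γ(s)) + 3·G^B_{n_x n_y τ_y τ_y}(x, γ(s)), where with r = x − γ(s), n_x = n(t), n_y = n(s), τ_y = τ(s): G^B_{n_x n_y n_y n_y}(x, γ(s)) = −(3/(4π))(n_x·n_y)/‖r‖² + (3/(2π))(r·n_y)(r·n_x)/‖r‖⁴ + (3/(2π))(r·n_y)²(n_x·n_y)/‖r‖⁴ − (2/π)(r·n_y)³(r·n_x)/‖r‖⁶, and G^B_{n_x n_y τ_y τ_y}(x, γ(s)) = (1/(2π))(n_x·n_y)(r·τ_y)²/‖r‖⁴ + (1/π)(r·n_y)(r·τ_y)(n_x·τ_y)/‖r‖⁴ − (2/π)(r·n_y)(r·τ_y)²(r·n_x)/‖r‖⁶ − (1/(4π))(n_x·n_y)/‖r‖² + (1/(2π))(r·n_y)(r·n_x)/‖r‖⁴. Then there is h₀ > 0 such that for 0 < |h| < h₀ the point γ(t) + h·n(t) does not lie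 on the curve, the function s ↦ K(γ(t), γ(s))·σ(s) is bounded on [0, L] with Lebesgue integral I := ∫₀^L K(γ(t), γ(s))σ(s) ds, and lim_{h→0⁺} ∫₀^L K(γ(t)+h·n(t), γ(s))σ(s) ds = κ(t)·σ(t) + I, while lim_{h→0⁻} ∫₀^L K(γ(t)+h·n(t), γ(s))σ(s) ds = −κ(t)·σ(t) + I. -/

import Mathlib

open Real Filter Topology MeasureTheory

noncomputable section

/-- Euclidean dot product on `ℝ × ℝ`. -/
def dot2 (v w : ℝ × ℝ) : ℝ := v.1 * w.1 + v.2 * w.2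

/-- Unit tangent vector `τ(s) = γ′(s)`. -/
def tang (γ : ℝ → ℝ × ℝ) (s : ℝ) : ℝ × ℝ := deriv γ s

/-- Unit normal vector `n(s) = (τ₂(s), −τ₁(s))`. -/
def nor (γ : ℝ → ℝ × ℝ) (s : ℝ) : ℝ × ℝ := ((deriv γ s).2, -(deriv γ s).1)

/-- Signed curvature `κ(s) = −γ″(s)·n(s)`. -/
def curv (γ : ℝ → ℝ × ℝ) (s : ℝ) : ℝ := -(dot2 (deriv (deriv γ) s) (nor γ s))

/-- The kernel `K(x, γ(s)) = G^B_{n_x n_y n_y n_y}(x, γ(s)) + 3 G^B_{n_x n_y τ_y τ_y}(x, γ(s))`,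
given by its explicit formula, with `r = x − γ(s)`, `n_x = n(t)`, `n_y = n(s)`, `τ_y = τ(s)`. -/
def K21clamped (γ : ℝ → ℝ × ℝ) (t : ℝ) (x : ℝ × ℝ) (s : ℝ) : ℝ :=
  (-(3 / (4 * π)) * dot2 (nor γ t) (nor γ s) / dot2 (x - γ s) (x - γ s)
      + 3 / (2 * π) * dot2 (x - γ s) (nor γ s) * dot2 (x - γ s) (nor γ t)
        / (dot2 (x - γ s) (x - γ s)) ^ 2
      + 3 / (2 * π) * (dot2 (x - γ s) (nor γ s)) ^ 2 * dot2 (nor γ t) (nor γ s)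
        / (dot2 (x - γ s) (x - γ s)) ^ 2
      - 2 / π * (dot2 (x - γ s) (nor γ s)) ^ 3 * dot2 (x - γ s) (nor γ t)
        / (dot2 (x - γ s) (x - γ s)) ^ 3)
    + 3 *
      (1 / (2 * π) * dot2 (nor γ t) (nor γ s) * (dot2 (x - γ s) (tang γ s)) ^ 2
          / (dot2 (x - γ s) (x - γ s)) ^ 2
        + 1 / π * dot2 (x - γ s) (nor γ s) * dot2 (x - γ s) (tang γ s)
            * dot2 (nor γ t) (tang γ s) / (dot2 (x - γ s) (x - γ s)) ^ 2
        - 2 / π * dot2 (x - γ s) (nor γ s) * (dot2 (x - γ s) (tang γ s)) ^ 2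
            * dot2 (x - γ s) (nor γ t) / (dot2 (x - γ s) (x - γ s)) ^ 3
        - 1 / (4 * π) * dot2 (nor γ t) (nor γ s) / dot2 (x - γ s) (x - γ s)
        + 1 / (2 * π) * dot2 (x - γ s) (nor γ s) * dot2 (x - γ s) (nor γ t)
          / (dot2 (x - γ s) (x - γ s)) ^ 2)

/-! Write `r = x − γ(s)`, `a = r · n(s)`, `b = r · τ(s)`, `ρ = ‖r‖²` and `N = n(t) · n(s)`. In the
moving frame the hypersingular part of `K σ` is a total derivative: `π K σ = (a / ρ) X − dF/ds`,
where `F = σ N a² b / ρ²` and `X` is bounded. Since `F` is periodic, the layer potential equals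
`π⁻¹ ∫ (a / ρ) X ds`, a double layer potential with bounded density `X`.

For `x = γ(t) + h n(t)` one has `a = a₀ + h N`, with `a₀` the value of `a` at `h = 0`. As
`|a₀| ≤ C (s − t)²` and `ρ ≥ c (h² + (s − t)²)`, the part of the integral with `a₀` passes to the
limit by dominated convergence, giving the integral on the curve. The part with `h N`
concentrates at `s = t`; after the substitution `s = t + |h| v` it converges to the integral of an
explicit rational profile over the line, which is `± π κ(t) σ(t)`. -/

section PlaneVectors

lemma dot2_eq_zero_iff {v : ℝ × ℝ} : dot2 v v = 0 ↔ v = 0 := by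
  simp only [dot2, Prod.ext_iff, Prod.fst_zero, Prod.snd_zero]
  exact mul_self_add_mul_self_eq_zero

lemma dot2_self_nonneg (v : ℝ × ℝ) : 0 ≤ dot2 v v :=
  add_nonneg (mul_self_nonneg _) (mul_self_nonneg _)

lemma abs_dot2_le_one {v w : ℝ × ℝ} (hv : dot2 v v = 1) (hw : dot2 w w = 1) :
    |dot2 v w| ≤ 1 := by
  have lagrange : dot2 v w ^ 2 + (v.1 * w.2 - v.2 * w.1) ^ 2 = dot2 v v * dot2 w w := by
    simp only [dot2]; ring
  rw [hv, hw] at lagrange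
  rw [← sq_le_one_iff_abs_le_one]
  linarith [sq_nonneg (v.1 * w.2 - v.2 * w.1)]

lemma hasDerivAt_dot2 {f g : ℝ → ℝ × ℝ} {f' g' : ℝ × ℝ} {s : ℝ} (hf : HasDerivAt f f' s)
    (hg : HasDerivAt g g' s) :
    HasDerivAt (fun s => dot2 (f s) (g s)) (dot2 f' (g s) + dot2 (f s) g') s := by
  have hf₁ : HasDerivAt (fun s => (f s).1) f'.1 s := hf.fst
  have hf₂ : HasDerivAt (fun s => (f s).2) f'.2 s := hf.snd
  have hg₁ : HasDerivAt (fun s => (g s).1) g'.1 s := hg.fst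
  have hg₂ : HasDerivAt (fun s => (g s).2) g'.2 s := hg.snd
  refine ((hf₁.mul hg₁).add (hf₂.mul hg₂)).congr_deriv ?_
  simp only [dot2]; ring

lemma continuous_dot2 {f g : ℝ → ℝ × ℝ} (hf : Continuous f) (hg : Continuous g) :
    Continuous fun s => dot2 (f s) (g s) := by
  unfold dot2; fun_prop

end PlaneVectors

/-- A twice continuously differentiable plane curve parametrized by arc length. -/
structure IsArcLengthCurve (γ : ℝ → ℝ × ℝ) : Prop where
  contDiff : ContDiff ℝ 2 γ
  unit_speed : ∀ s, dot2 (deriv γ s) (deriv γ s) = 1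

/-- The component `r · n(s)` of `r = x − γ(s)` along the normal at the source point `γ(s)`. -/
def normalCoord (γ : ℝ → ℝ × ℝ) (x : ℝ × ℝ) (s : ℝ) : ℝ := dot2 (x - γ s) (nor γ s)

/-- The component `r · τ(s)` of `r = x − γ(s)` along the tangent at the source point `γ(s)`. -/
def tangentCoord (γ : ℝ → ℝ × ℝ) (x : ℝ × ℝ) (s : ℝ) : ℝ := dot2 (x - γ s) (tang γ s)

/-- The squared Euclidean distance `‖x − γ(s)‖²`; the norm of `ℝ × ℝ` is the supremum norm. -/
def sqDist (γ : ℝ → ℝ × ℝ) (x : ℝ × ℝ) (s : ℝ) : ℝ := dot2 (x - γ s) (x - γ s)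

/-- The point of the normal line at `γ(t)` at signed distance `h` from the curve point `γ(t)`. -/
def normalPoint (γ : ℝ → ℝ × ℝ) (t h : ℝ) : ℝ × ℝ := γ t + h • nor γ t

@[simp] lemma normalPoint_zero (γ : ℝ → ℝ × ℝ) (t : ℝ) : normalPoint γ t 0 = γ t := by
  simp [normalPoint]

lemma sqDist_nonneg (γ : ℝ → ℝ × ℝ) (x : ℝ × ℝ) (s : ℝ) : 0 ≤ sqDist γ x s := dot2_self_nonneg _

lemma sqDist_pos_iff {γ : ℝ → ℝ × ℝ} {x : ℝ × ℝ} {s : ℝ} : 0 < sqDist γ x s ↔ x ≠ γ s := by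
  rw [(sqDist_nonneg γ x s).lt_iff_ne', sqDist, Ne, dot2_eq_zero_iff, sub_eq_zero]

lemma normalCoord_normalPoint (γ : ℝ → ℝ × ℝ) (t h s : ℝ) :
    normalCoord γ (normalPoint γ t h) s
      = normalCoord γ (γ t) s + h * dot2 (nor γ t) (nor γ s) := by
  simp only [normalPoint, normalCoord, dot2, Prod.fst_sub, Prod.snd_sub, Prod.fst_add,
    Prod.snd_add, Prod.smul_fst, Prod.smul_snd, smul_eq_mul]
  ring

lemma tangentCoord_normalPoint (γ : ℝ → ℝ × ℝ) (t h s : ℝ) :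
    tangentCoord γ (normalPoint γ t h) s
      = tangentCoord γ (γ t) s + h * dot2 (nor γ t) (tang γ s) := by
  simp only [normalPoint, tangentCoord, dot2, Prod.fst_sub, Prod.snd_sub, Prod.fst_add,
    Prod.snd_add, Prod.smul_fst, Prod.smul_snd, smul_eq_mul]
  ring

@[simp] lemma normalCoord_self (γ : ℝ → ℝ × ℝ) (s : ℝ) : normalCoord γ (γ s) s = 0 := by
  simp [normalCoord, dot2]

@[simp] lemma tangentCoord_self (γ : ℝ → ℝ × ℝ) (s : ℝ) : tangentCoord γ (γ s) s = 0 := by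
  simp [tangentCoord, dot2]

lemma dot2_nor_tang_self (γ : ℝ → ℝ × ℝ) (s : ℝ) : dot2 (nor γ s) (tang γ s) = 0 := by
  simp only [dot2, nor, tang]; ring

lemma abs_sub_le_mul_abs_sub {f f' : ℝ → ℝ} {t s C : ℝ} (hf : ∀ u, HasDerivAt f (f' u) u)
    (hC : ∀ u, |u - t| ≤ |s - t| → |f' u| ≤ C) : |f s - f t| ≤ C * |s - t| :=
  (convex_uIcc t s).norm_image_sub_le_of_norm_hasDerivWithin_le
    (fun u _ => (hf u).hasDerivWithinAt)
    (fun _ hu => hC _ (Set.abs_sub_left_of_mem_uIcc hu)) Set.left_mem_uIcc Set.right_mem_uIcc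

/-- On the parameter set `I` the curve keeps away from the normal line at `γ(t)` as a straight line
would, up to the factor `c`, as long as the point on the normal line is within `h₀` of `γ(t)`. -/
structure NormalLineSeparated (γ : ℝ → ℝ × ℝ) (t h₀ c : ℝ) (I : Set ℝ) : Prop where
  h₀_pos : 0 < h₀
  c_pos : 0 < c
  mul_le_sqDist : ∀ h, |h| < h₀ → ∀ s ∈ I,
    c * (h ^ 2 + (s - t) ^ 2) ≤ sqDist γ (normalPoint γ t h) s

namespace IsArcLengthCurve

variable {γ : ℝ → ℝ × ℝ} {t s C : ℝ}

lemma dot2_tang_self (hγ : IsArcLengthCurve γ) (s : ℝ) : dot2 (tang γ s) (tang γ s) = 1 :=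
  hγ.unit_speed s

lemma dot2_nor_self (hγ : IsArcLengthCurve γ) (s : ℝ) : dot2 (nor γ s) (nor γ s) = 1 := by
  have unit := hγ.unit_speed s
  simp only [dot2, nor] at unit ⊢
  linarith

lemma dot2_eq_frame (hγ : IsArcLengthCurve γ) (v w : ℝ × ℝ) (s : ℝ) :
    dot2 v w = dot2 v (nor γ s) * dot2 w (nor γ s) + dot2 v (tang γ s) * dot2 w (tang γ s) := by
  have unit := hγ.unit_speed s
  simp only [dot2, nor, tang] at unit ⊢
  linear_combination (-(v.1 * w.1 + v.2 * w.2)) * unit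

lemma sqDist_eq (hγ : IsArcLengthCurve γ) (x : ℝ × ℝ) (s : ℝ) :
    sqDist γ x s = normalCoord γ x s ^ 2 + tangentCoord γ x s ^ 2 := by
  rw [sqDist, hγ.dot2_eq_frame _ _ s, ← sq, ← sq, normalCoord, tangentCoord]

lemma sqDist_normalPoint (hγ : IsArcLengthCurve γ) (t h s : ℝ) :
    sqDist γ (normalPoint γ t h) s =
      sqDist γ (γ t) s + h ^ 2 - 2 * h * normalCoord γ (γ s) t := by
  have unit := hγ.dot2_nor_self t
  simp only [sqDist, normalPoint, normalCoord, dot2, Prod.fst_sub, Prod.snd_sub, Prod.fst_add,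
    Prod.snd_add, Prod.smul_fst, Prod.smul_snd, smul_eq_mul] at unit ⊢
  linear_combination h ^ 2 * unit

lemma differentiable_tang (hγ : IsArcLengthCurve γ) : Differentiable ℝ (tang γ) :=
  (hγ.contDiff.iterate_deriv' 1 1).differentiable one_ne_zero

lemma continuous_tang (hγ : IsArcLengthCurve γ) : Continuous (tang γ) :=
  hγ.differentiable_tang.continuous

lemma continuous_nor (hγ : IsArcLengthCurve γ) : Continuous (nor γ) :=
  hγ.continuous_tang.snd.prodMk hγ.continuous_tang.fst.neg

lemma continuous_curv (hγ : IsArcLengthCurve γ) : Continuous (curv γ) :=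
  (continuous_dot2 (hγ.contDiff.iterate_deriv' 0 2).continuous hγ.continuous_nor).neg

lemma hasDerivAt (hγ : IsArcLengthCurve γ) (s : ℝ) : HasDerivAt γ (tang γ s) s :=
  (hγ.contDiff.differentiable two_ne_zero s).hasDerivAt

lemma hasDerivAt_tang (hγ : IsArcLengthCurve γ) (s : ℝ) :
    HasDerivAt (tang γ) (-curv γ s • nor γ s) s := by
  have deriv_tang : HasDerivAt (tang γ) (deriv (deriv γ) s) s :=
    (hγ.differentiable_tang s).hasDerivAt
  have orthogonal : dot2 (deriv (deriv γ) s) (tang γ s) = 0 := by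
    have speed := hasDerivAt_dot2 deriv_tang deriv_tang
    simp only [hγ.dot2_tang_self] at speed
    have := speed.unique (hasDerivAt_const s 1)
    simp only [dot2] at this ⊢
    linarith
  have unit := hγ.unit_speed s
  refine deriv_tang.congr_deriv (Prod.ext ?_ ?_) <;>
    simp only [curv, dot2, nor, tang, Prod.smul_mk, smul_eq_mul] at unit orthogonal ⊢
  · linear_combination (-(deriv (deriv γ) s).1) * unit + (deriv γ s).1 * orthogonal
  · linear_combination (-(deriv (deriv γ) s).2) * unit + (deriv γ s).2 * orthogonal

lemma hasDerivAt_nor (hγ : IsArcLengthCurve γ) (s : ℝ) :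
    HasDerivAt (nor γ) (curv γ s • tang γ s) s := by
  have deriv₁ : HasDerivAt (fun s => (tang γ s).1) (-curv γ s • nor γ s).1 s :=
    (hγ.hasDerivAt_tang s).fst
  have deriv₂ : HasDerivAt (fun s => (tang γ s).2) (-curv γ s • nor γ s).2 s :=
    (hγ.hasDerivAt_tang s).snd
  have deriv_nor : HasDerivAt (nor γ) ((-curv γ s • nor γ s).2, -(-curv γ s • nor γ s).1) s :=
    deriv₂.prodMk deriv₁.neg
  exact deriv_nor.congr_deriv (by simp [nor, tang, Prod.ext_iff])

lemma hasDerivAt_dot2_nor (hγ : IsArcLengthCurve γ) (v : ℝ × ℝ) (s : ℝ) :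
    HasDerivAt (fun s => dot2 v (nor γ s)) (curv γ s * dot2 v (tang γ s)) s := by
  refine (hasDerivAt_dot2 (hasDerivAt_const s v) (hγ.hasDerivAt_nor s)).congr_deriv ?_
  simp only [dot2, Prod.fst_zero, Prod.snd_zero, Prod.smul_fst, Prod.smul_snd, smul_eq_mul]
  ring

lemma hasDerivAt_dot2_tang (hγ : IsArcLengthCurve γ) (v : ℝ × ℝ) (s : ℝ) :
    HasDerivAt (fun s => dot2 v (tang γ s)) (-curv γ s * dot2 v (nor γ s)) s := by
  refine (hasDerivAt_dot2 (hasDerivAt_const s v) (hγ.hasDerivAt_tang s)).congr_deriv ?_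
  simp only [dot2, Prod.fst_zero, Prod.snd_zero, Prod.smul_fst, Prod.smul_snd, smul_eq_mul]
  ring

lemma hasDerivAt_normalCoord (hγ : IsArcLengthCurve γ) (x : ℝ × ℝ) (s : ℝ) :
    HasDerivAt (normalCoord γ x) (curv γ s * tangentCoord γ x s) s := by
  refine (hasDerivAt_dot2 ((hγ.hasDerivAt s).const_sub x) (hγ.hasDerivAt_nor s)).congr_deriv ?_
  have orthogonal := dot2_nor_tang_self γ s
  simp only [tangentCoord, dot2, Prod.fst_neg, Prod.snd_neg, Prod.smul_fst, Prod.smul_snd,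
    smul_eq_mul] at orthogonal ⊢
  linear_combination -orthogonal

lemma hasDerivAt_tangentCoord (hγ : IsArcLengthCurve γ) (x : ℝ × ℝ) (s : ℝ) :
    HasDerivAt (tangentCoord γ x) (-1 - curv γ s * normalCoord γ x s) s := by
  refine (hasDerivAt_dot2 ((hγ.hasDerivAt s).const_sub x) (hγ.hasDerivAt_tang s)).congr_deriv ?_
  have unit := hγ.dot2_tang_self s
  simp only [normalCoord, dot2, Prod.fst_neg, Prod.snd_neg, Prod.smul_fst, Prod.smul_snd,
    smul_eq_mul] at unit ⊢
  linear_combination -unit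

lemma hasDerivAt_sqDist (hγ : IsArcLengthCurve γ) (x : ℝ × ℝ) (s : ℝ) :
    HasDerivAt (sqDist γ x) (-2 * tangentCoord γ x s) s := by
  refine (hasDerivAt_dot2 ((hγ.hasDerivAt s).const_sub x)
    ((hγ.hasDerivAt s).const_sub x)).congr_deriv ?_
  simp only [tangentCoord, dot2, Prod.fst_neg, Prod.snd_neg]
  ring

lemma continuous_normalCoord (hγ : IsArcLengthCurve γ) (x : ℝ × ℝ) :
    Continuous (normalCoord γ x) :=
  continuous_iff_continuousAt.2 fun s => (hγ.hasDerivAt_normalCoord x s).continuousAt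

lemma continuous_tangentCoord (hγ : IsArcLengthCurve γ) (x : ℝ × ℝ) :
    Continuous (tangentCoord γ x) :=
  continuous_iff_continuousAt.2 fun s => (hγ.hasDerivAt_tangentCoord x s).continuousAt

lemma continuous_sqDist (hγ : IsArcLengthCurve γ) (x : ℝ × ℝ) : Continuous (sqDist γ x) :=
  continuous_iff_continuousAt.2 fun s => (hγ.hasDerivAt_sqDist x s).continuousAt

lemma abs_dot2_nor_nor_le (hγ : IsArcLengthCurve γ) (t s : ℝ) :
    |dot2 (nor γ t) (nor γ s)| ≤ 1 :=
  abs_dot2_le_one (hγ.dot2_nor_self t) (hγ.dot2_nor_self s)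

lemma abs_dot2_nor_tang_le_one (hγ : IsArcLengthCurve γ) (t s : ℝ) :
    |dot2 (nor γ t) (tang γ s)| ≤ 1 :=
  abs_dot2_le_one (hγ.dot2_nor_self t) (hγ.dot2_tang_self s)

lemma abs_dot2_nor_tang_le (hγ : IsArcLengthCurve γ) (hC : ∀ s, |curv γ s| ≤ C) (t s : ℝ) :
    |dot2 (nor γ t) (tang γ s)| ≤ C * |s - t| := by
  have := abs_sub_le_mul_abs_sub (hγ.hasDerivAt_dot2_tang (nor γ t)) (t := t) (s := s) (C := C)
    fun u _ => by
      rw [abs_mul, abs_neg]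
      exact mul_le_of_le_one_right (abs_nonneg _) (hγ.abs_dot2_nor_nor_le t u) |>.trans (hC u)
  rwa [dot2_nor_tang_self, sub_zero] at this

lemma abs_tangentCoord_le (hγ : IsArcLengthCurve γ) (t s : ℝ) :
    |tangentCoord γ (γ t) s| ≤ |s - t| := by
  have deriv_component : ∀ u, HasDerivAt (fun u => dot2 (γ u) (tang γ s))
      (dot2 (tang γ u) (tang γ s)) u := fun u => by
    simpa [dot2] using hasDerivAt_dot2 (hγ.hasDerivAt u) (hasDerivAt_const u (tang γ s))
  have := abs_sub_le_mul_abs_sub deriv_component (t := t) (s := s) (C := 1) fun u _ =>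
    abs_dot2_le_one (hγ.dot2_tang_self u) (hγ.dot2_tang_self s)
  rw [one_mul, abs_sub_comm] at this
  convert this using 2
  simp only [tangentCoord, dot2, Prod.fst_sub, Prod.snd_sub]
  ring

lemma abs_normalCoord_le (hγ : IsArcLengthCurve γ) (hC : ∀ s, |curv γ s| ≤ C) (t s : ℝ) :
    |normalCoord γ (γ t) s| ≤ C * (s - t) ^ 2 := by
  have C_nonneg : 0 ≤ C := (abs_nonneg _).trans (hC t)
  have := abs_sub_le_mul_abs_sub (hγ.hasDerivAt_normalCoord (γ t)) (t := t) (s := s)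
    (C := C * |s - t|) fun u hu => by
      rw [abs_mul]
      exact mul_le_mul (hC u) ((hγ.abs_tangentCoord_le t u).trans hu) (abs_nonneg _) C_nonneg
  rwa [normalCoord_self, sub_zero, mul_assoc, abs_mul_abs_self, ← sq] at this

lemma exists_mul_sq_le_sqDist (hγ : IsArcLengthCurve γ) {I : Set ℝ} (hI : IsCompact I)
    (simple : ∀ s ∈ I, γ s = γ t → s = t) :
    ∃ c > 0, ∀ s ∈ I, c * (s - t) ^ 2 ≤ sqDist γ (γ t) s := by
  have factor (s : ℝ) :
      sqDist γ (γ t) s = dot2 (dslope γ t s) (dslope γ t s) * (s - t) ^ 2 := by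
    have chord : γ t - γ s = -((s - t) • dslope γ t s) := by rw [sub_smul_dslope, neg_sub]
    simp only [sqDist, chord, dot2, Prod.fst_neg, Prod.snd_neg, Prod.smul_fst, Prod.smul_snd,
      smul_eq_mul]
    ring
  have continuous_slope : Continuous (dslope γ t) := by
    rw [← continuousOn_univ, continuousOn_dslope univ_mem]
    exact ⟨hγ.contDiff.continuous.continuousOn, (hγ.hasDerivAt t).differentiableAt⟩
  have slope_pos : ∀ s ∈ I, 0 < dot2 (dslope γ t s) (dslope γ t s) := fun s hs => by
    by_cases hst : s = t
    · rw [hst, dslope_same]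
      exact (hγ.unit_speed t).symm ▸ one_pos
    · have := sqDist_pos_iff.2 (mt (fun h => simple s hs h.symm) hst)
      rw [factor] at this
      exact pos_of_mul_pos_left this (sq_nonneg _)
  obtain ⟨c, c_pos, hc⟩ := hI.exists_forall_le'
    (continuous_dot2 continuous_slope continuous_slope).continuousOn slope_pos
  exact ⟨c, c_pos, fun s hs => by rw [factor]; gcongr; exact hc s hs⟩

lemma exists_normalLineSeparated (hγ : IsArcLengthCurve γ) (hC : ∀ s, |curv γ s| ≤ C) {I : Set ℝ}
    (hI : IsCompact I) (simple : ∀ s ∈ I, γ s = γ t → s = t) :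
    ∃ h₀ c, NormalLineSeparated γ t h₀ c I := by
  obtain ⟨c, c_pos, hc⟩ := hγ.exists_mul_sq_le_sqDist hI simple
  have C_nonneg : 0 ≤ C := (abs_nonneg _).trans (hC t)
  refine ⟨c / (4 * (C + 1)), min 1 (c / 2), by positivity, by positivity, fun h hh s hs => ?_⟩
  have cross : |h * normalCoord γ (γ s) t| ≤ c / 4 * (s - t) ^ 2 := by
    calc |h * normalCoord γ (γ s) t| = |h| * |normalCoord γ (γ s) t| := abs_mul _ _
      _ ≤ c / (4 * (C + 1)) * ((C + 1) * (s - t) ^ 2) := by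
        gcongr
        calc |normalCoord γ (γ s) t| ≤ C * (t - s) ^ 2 := hγ.abs_normalCoord_le hC s t
          _ ≤ (C + 1) * (s - t) ^ 2 := by rw [sub_sq_comm]; gcongr; exact (lt_add_one C).le
      _ = c / 4 * (s - t) ^ 2 := by field_simp
  calc min 1 (c / 2) * (h ^ 2 + (s - t) ^ 2)
      ≤ 1 * h ^ 2 + c / 2 * (s - t) ^ 2 := by
        rw [mul_add]
        gcongr
        exacts [min_le_left _ _, min_le_right _ _]
    _ ≤ sqDist γ (normalPoint γ t h) s := by
        rw [hγ.sqDist_normalPoint]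
        linarith [hc s hs, (abs_le.1 cross).2]

end IsArcLengthCurve

section Integrals

lemma intervalIntegrable_of_abs_le {f : ℝ → ℝ} {a b M : ℝ} (hab : a ≤ b) (hf : Measurable f)
    (hM : ∀ s ∈ Set.Icc a b, |f s| ≤ M) : IntervalIntegrable f volume a b := by
  rw [intervalIntegrable_iff_integrableOn_Icc_of_le hab]
  exact Measure.integrableOn_of_bounded (by simp) hf.aestronglyMeasurable
    ((ae_restrict_iff' measurableSet_Icc).2 (Eventually.of_forall hM))

lemma tendsto_intervalIntegral_of_rescaled {E : Type*} [NormedAddCommGroup E] [NormedSpace ℝ E]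
    {f : ℝ → ℝ → E} {g : ℝ → E} {bound : ℝ → ℝ} {a b t : ℝ} (hat : a < t) (htb : t < b)
    (hf : ∀ η, StronglyMeasurable (f η)) (bound_nonneg : ∀ v, 0 ≤ bound v)
    (hbound : ∀ᶠ η in 𝓝[>] 0, ∀ v, t + η * v ∈ Set.Icc a b → ‖η • f η (t + η * v)‖ ≤ bound v)
    (bound_integrable : Integrable bound)
    (hlim : ∀ v, Tendsto (fun η => η • f η (t + η * v)) (𝓝[>] 0) (𝓝 (g v))) :
    Tendsto (fun η => ∫ s in a..b, f η s) (𝓝[>] 0) (𝓝 (∫ v, g v)) := by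
  let I (η : ℝ) : Set ℝ := Set.Ioc ((a - t) / η) ((b - t) / η)
  have mem_I {η v : ℝ} (hη : 0 < η) : v ∈ I η ↔ t + η * v ∈ Set.Ioc a b := by
    simp only [I, Set.mem_Ioc, div_lt_iff₀ hη, le_div_iff₀ hη, sub_lt_iff_lt_add',
      le_sub_iff_add_le', mul_comm v]
  have change_of_variables : ∀ᶠ η in 𝓝[>] (0 : ℝ),
      ∫ v, (I η).indicator (fun v => η • f η (t + η * v)) v = ∫ s in a..b, f η s := by
    filter_upwards [self_mem_nhdsWithin] with η (hη : 0 < η)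
    have endpoints : (a - t) / η ≤ (b - t) / η := by gcongr; exact (hat.trans htb).le
    rw [integral_indicator measurableSet_Ioc, ← intervalIntegral.integral_of_le endpoints,
      intervalIntegral.integral_smul, intervalIntegral.smul_integral_comp_add_mul,
      mul_div_cancel₀ _ hη.ne', mul_div_cancel₀ _ hη.ne', add_sub_cancel, add_sub_cancel]
  refine (tendsto_integral_filter_of_dominated_convergence bound ?_ ?_ bound_integrable
    (Eventually.of_forall fun v => ?_)).congr' change_of_variables
  · exact Eventually.of_forall fun η => (((hf η).comp_measurable
      (by fun_prop : Measurable fun v => t + η * v)).const_smul η).indicator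
        measurableSet_Ioc |>.aestronglyMeasurable
  · filter_upwards [hbound, self_mem_nhdsWithin] with η hη (η_pos : 0 < η)
    refine Eventually.of_forall fun v => ?_
    by_cases hv : v ∈ I η
    · rw [Set.indicator_of_mem hv]
      exact hη v (Set.Ioc_subset_Icc_self ((mem_I η_pos).1 hv))
    · rw [Set.indicator_of_notMem hv, norm_zero]
      exact bound_nonneg v
  · have to_center : Tendsto (fun η => t + η * v) (𝓝[>] 0) (𝓝 t) :=
      tendsto_nhdsWithin_of_tendsto_nhds (Continuous.tendsto' (by fun_prop) _ _ (by simp))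
    refine (hlim v).congr' ?_
    filter_upwards [to_center.eventually (Ioo_mem_nhds hat htb), self_mem_nhdsWithin]
      with η hη (η_pos : 0 < η)
    rw [Set.indicator_of_mem ((mem_I η_pos).2 (Set.Ioo_subset_Ioc_self hη))]

end Integrals

/-- The density `X` of the double layer potential `π⁻¹ ∫ (a / ρ) X` that integration by parts makes
of the layer potential with kernel `K`. Here `a = r · n_y`, `b = r · τ_y` and `ρ = ‖r‖²`, while
`δ = σ (n_x · τ_y)`, `m = κ σ (n_x · n_y)` and `φ` is the derivative of `σ (n_x · n_y)`. -/
def doubleLayerDensity (a b δ m φ : ℝ) : ℝ :=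
  (a * b * φ + m * (2 * b ^ 2 - a ^ 2)) / (a ^ 2 + b ^ 2)
    + 4 * δ * a ^ 2 * b / (a ^ 2 + b ^ 2) ^ 2

section DoubleLayerDensity

lemma doubleLayerDensity_mul {c : ℝ} (hc : c ≠ 0) (a b δ m φ : ℝ) :
    doubleLayerDensity (c * a) (c * b) (c * δ) m φ = doubleLayerDensity a b δ m φ := by
  unfold doubleLayerDensity
  have scale : (c * a) ^ 2 + (c * b) ^ 2 = c ^ 2 * (a ^ 2 + b ^ 2) := by ring
  rw [scale, mul_pow (c ^ 2)]
  congr 1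
  · rw [← mul_div_mul_left _ (a ^ 2 + b ^ 2) (pow_ne_zero 2 hc)]
    ring
  · rw [← mul_div_mul_left _ ((a ^ 2 + b ^ 2) ^ 2) (pow_ne_zero 2 (pow_ne_zero 2 hc))]
    ring

lemma abs_doubleLayerDensity_le {a b δ D : ℝ} (m φ : ℝ) (hD : 0 ≤ D)
    (hδ : δ ^ 2 ≤ D ^ 2 * (a ^ 2 + b ^ 2)) :
    |doubleLayerDensity a b δ m φ| ≤ |φ| + 2 * |m| + 4 * D := by
  unfold doubleLayerDensity
  obtain hρ | hρ := (by positivity : 0 ≤ a ^ 2 + b ^ 2).eq_or_lt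
  · simp only [← hρ, zero_pow two_ne_zero, div_zero, add_zero, abs_zero]
    positivity
  have ab_le : |a * b| ≤ a ^ 2 + b ^ 2 := by
    rw [abs_le]; constructor <;> nlinarith [sq_nonneg (a + b), sq_nonneg (a - b)]
  have quadratic_le : |2 * b ^ 2 - a ^ 2| ≤ 2 * (a ^ 2 + b ^ 2) := by
    rw [abs_le]; constructor <;> linarith [sq_nonneg a, sq_nonneg b]
  have δb_le : |δ * b| ≤ D * (a ^ 2 + b ^ 2) := by
    refine abs_le_of_sq_le_sq ?_ (by positivity)
    calc (δ * b) ^ 2 = δ ^ 2 * b ^ 2 := mul_pow _ _ _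
      _ ≤ D ^ 2 * (a ^ 2 + b ^ 2) * (a ^ 2 + b ^ 2) := by
        gcongr; exact le_add_of_nonneg_left (sq_nonneg a)
      _ = (D * (a ^ 2 + b ^ 2)) ^ 2 := by ring
  have first : |(a * b * φ + m * (2 * b ^ 2 - a ^ 2)) / (a ^ 2 + b ^ 2)| ≤ |φ| + 2 * |m| := by
    rw [abs_div, abs_of_pos hρ, div_le_iff₀ hρ]
    calc |a * b * φ + m * (2 * b ^ 2 - a ^ 2)| ≤ |a * b| * |φ| + |m| * |2 * b ^ 2 - a ^ 2| :=
          (abs_add_le _ _).trans_eq (by rw [abs_mul (a * b), abs_mul m])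
      _ ≤ (a ^ 2 + b ^ 2) * |φ| + |m| * (2 * (a ^ 2 + b ^ 2)) := by gcongr
      _ = (|φ| + 2 * |m|) * (a ^ 2 + b ^ 2) := by ring
  have second : |4 * δ * a ^ 2 * b / (a ^ 2 + b ^ 2) ^ 2| ≤ 4 * D := by
    rw [abs_div, abs_of_pos (pow_pos hρ 2), div_le_iff₀ (pow_pos hρ 2)]
    calc |4 * δ * a ^ 2 * b| = 4 * |δ * b| * a ^ 2 := by
          rw [show 4 * δ * a ^ 2 * b = 4 * (δ * b) * a ^ 2 by ring, abs_mul, abs_mul,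
            abs_of_nonneg (sq_nonneg a), abs_of_pos four_pos]
      _ ≤ 4 * (D * (a ^ 2 + b ^ 2)) * (a ^ 2 + b ^ 2) := by
        gcongr; exact le_add_of_nonneg_right (sq_nonneg b)
      _ = 4 * D * (a ^ 2 + b ^ 2) ^ 2 := by ring
  exact (abs_add_le _ _).trans (add_le_add first second)

lemma tendsto_doubleLayerDensity {α : Type*} {l : Filter α} {a b δ m φ : α → ℝ}
    {a₀ b₀ δ₀ m₀ φ₀ : ℝ} (ha : Tendsto a l (𝓝 a₀)) (hb : Tendsto b l (𝓝 b₀))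
    (hδ : Tendsto δ l (𝓝 δ₀)) (hm : Tendsto m l (𝓝 m₀)) (hφ : Tendsto φ l (𝓝 φ₀))
    (h₀ : a₀ ^ 2 + b₀ ^ 2 ≠ 0) :
    Tendsto (fun i => doubleLayerDensity (a i) (b i) (δ i) (m i) (φ i)) l
      (𝓝 (doubleLayerDensity a₀ b₀ δ₀ m₀ φ₀)) := by
  have hρ := (ha.pow 2).add (hb.pow 2)
  exact ((((ha.mul hb).mul hφ).add (hm.mul (((hb.pow 2).const_mul 2).sub (ha.pow 2)))).div hρ
    h₀).add ((((hδ.const_mul 4).mul (ha.pow 2)).mul hb).div (hρ.pow 2) (pow_ne_zero 2 h₀))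

lemma measurable_doubleLayerDensity {a b δ m φ : ℝ → ℝ} (ha : Measurable a) (hb : Measurable b)
    (hδ : Measurable δ) (hm : Measurable m) (hφ : Measurable φ) :
    Measurable fun s => doubleLayerDensity (a s) (b s) (δ s) (m s) (φ s) := by
  unfold doubleLayerDensity; fun_prop

lemma tendsto_one_add_sq_inv_cocompact :
    Tendsto (fun v : ℝ => (1 + v ^ 2)⁻¹) (cocompact ℝ) (𝓝 0) := by
  have sq_atTop : Tendsto (fun v : ℝ => v ^ 2) (cocompact ℝ) atTop :=
    ((tendsto_pow_atTop two_ne_zero).comp (tendsto_norm_cocompact_atTop (E := ℝ))).congr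
      fun v => sq_abs v
  exact tendsto_inv_atTop_zero.comp (tendsto_atTop_add_const_left _ _ sq_atTop)

lemma tendsto_id_div_one_add_sq_cocompact :
    Tendsto (fun v : ℝ => v / (1 + v ^ 2)) (cocompact ℝ) (𝓝 0) := by
  have inv_zero : Tendsto (fun v : ℝ => |v|⁻¹) (cocompact ℝ) (𝓝 0) :=
    tendsto_inv_atTop_zero.comp (tendsto_norm_cocompact_atTop (E := ℝ))
  refine squeeze_zero_norm (fun v => ?_) inv_zero
  obtain rfl | hv := eq_or_ne v 0
  · simp
  have : 0 < |v| := abs_pos.2 hv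
  rw [norm_div, Real.norm_eq_abs, Real.norm_of_nonneg (by positivity), ← sq_abs,
    div_le_iff₀ (by positivity), ← div_eq_inv_mul, le_div_iff₀ this]
  linarith

/-- The profile, at unit distance from the tangent line, of the concentrating part of the double
layer potential. The value `e = ±1` tells the side of the curve. -/
def jumpProfile (e m φ v : ℝ) : ℝ := doubleLayerDensity e (-v) (-m * v) m φ / (1 + v ^ 2)

lemma integrable_jumpProfile {e : ℝ} (he : e ^ 2 = 1) (m φ : ℝ) :
    Integrable (jumpProfile e m φ) := by
  refine (integrable_inv_one_add_sq.const_mul (|φ| + 2 * |m| + 4 * |m|)).mono' ?_ ?_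
  · refine (Measurable.div (measurable_doubleLayerDensity ?_ ?_ ?_ ?_ ?_)
      ?_).aestronglyMeasurable <;> fun_prop
  · refine Eventually.of_forall fun v => ?_
    rw [jumpProfile, norm_div, Real.norm_of_nonneg (by positivity : 0 ≤ 1 + v ^ 2), div_eq_mul_inv]
    gcongr
    refine abs_doubleLayerDensity_le m φ (abs_nonneg m) ?_
    rw [sq_abs, he]
    linarith [sq_nonneg m, mul_pow (-m) v 2]

lemma hasDerivAt_jumpProfile_primitive {e : ℝ} (he : e ^ 2 = 1) (m φ v : ℝ) :
    HasDerivAt (fun v => m * arctan v - (m * (v / (1 + v ^ 2) * (1 + (1 + v ^ 2)⁻¹))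
      - e * φ / 2 * (1 + v ^ 2)⁻¹)) (jumpProfile e m φ v) v := by
  have ne : 1 + v ^ 2 ≠ 0 := by positivity
  have hq : HasDerivAt (fun v : ℝ => 1 + v ^ 2) (2 * v) v := by
    simpa using (hasDerivAt_pow 2 v).const_add 1
  refine (((hasDerivAt_arctan v).const_mul m).sub (((((hasDerivAt_id v).div hq ne).mul
    ((hq.inv ne).const_add 1)).const_mul m).sub ((hq.inv ne).const_mul (e * φ / 2)))).congr_deriv ?_
  simp only [jumpProfile, doubleLayerDensity, he, neg_sq, id, Pi.div_apply, Pi.inv_apply]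
  field_simp
  ring

lemma integral_jumpProfile {e : ℝ} (he : e ^ 2 = 1) (m φ : ℝ) :
    ∫ v, jumpProfile e m φ v = π * m := by
  have rational_part : Tendsto (fun v : ℝ => m * (v / (1 + v ^ 2) * (1 + (1 + v ^ 2)⁻¹))
      - e * φ / 2 * (1 + v ^ 2)⁻¹) (cocompact ℝ) (𝓝 0) := by
    simpa using ((tendsto_id_div_one_add_sq_cocompact.mul
      (tendsto_one_add_sq_inv_cocompact.const_add 1)).const_mul m).sub
        (tendsto_one_add_sq_inv_cocompact.const_mul (e * φ / 2))
  have limit {l : Filter ℝ} {c : ℝ} (hl : l ≤ cocompact ℝ) (hc : Tendsto arctan l (𝓝 c)) :=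
    (hc.const_mul m).sub (rational_part.mono_left hl)
  rw [integral_of_hasDerivAt_of_tendsto (hasDerivAt_jumpProfile_primitive he m φ)
    (integrable_jumpProfile he m φ)
    (limit atBot_le_cocompact (tendsto_nhds_of_tendsto_nhdsWithin tendsto_arctan_atBot))
    (limit atTop_le_cocompact (tendsto_nhds_of_tendsto_nhdsWithin tendsto_arctan_atTop))]
  ring

end DoubleLayerDensity

/-- The double layer density `X` of `doubleLayerDensity` at the source point `γ(s)`, for the layer
potential of `σ` differentiated in the direction `n(t)` and evaluated at `x`. -/
def layerDensity (γ : ℝ → ℝ × ℝ) (σ : ℝ → ℝ) (t : ℝ) (x : ℝ × ℝ) (s : ℝ) : ℝ :=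
  doubleLayerDensity (normalCoord γ x s) (tangentCoord γ x s) (σ s * dot2 (nor γ t) (tang γ s))
    (curv γ s * σ s * dot2 (nor γ t) (nor γ s))
    (deriv σ s * dot2 (nor γ t) (nor γ s) + σ s * (curv γ s * dot2 (nor γ t) (tang γ s)))

/-- The function of `s` whose endpoint values are the boundary terms when the layer potential of
`σ` is integrated by parts. -/
def boundaryTerm (γ : ℝ → ℝ × ℝ) (σ : ℝ → ℝ) (t : ℝ) (x : ℝ × ℝ) (s : ℝ) : ℝ :=
  σ s * dot2 (nor γ t) (nor γ s) *
    (normalCoord γ x s ^ 2 * tangentCoord γ x s / sqDist γ x s ^ 2)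

namespace IsArcLengthCurve

variable {γ : ℝ → ℝ × ℝ} {σ : ℝ → ℝ} {t α β : ℝ}

lemma K21clamped_eq (hγ : IsArcLengthCurve γ) (t : ℝ) (x : ℝ × ℝ) (s : ℝ) :
    K21clamped γ t x s = π⁻¹ * ((dot2 (nor γ t) (nor γ s) *
        (normalCoord γ x s ^ 2 - 3 * tangentCoord γ x s ^ 2) +
      4 * dot2 (nor γ t) (tang γ s) * (normalCoord γ x s * tangentCoord γ x s)) *
        normalCoord γ x s ^ 2 / sqDist γ x s ^ 3) := by
  have hρ := hγ.sqDist_eq x s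
  have decompose := hγ.dot2_eq_frame (x - γ s) (nor γ t) s
  rw [sqDist, normalCoord, tangentCoord] at hρ
  simp only [K21clamped, sqDist, normalCoord, tangentCoord, decompose]
  by_cases h : dot2 (x - γ s) (x - γ s) = 0
  · simp [h]
  have dot2_comm (v w : ℝ × ℝ) : dot2 v w = dot2 w v := by simp only [dot2, mul_comm]
  rw [dot2_comm (nor γ t), dot2_comm (nor γ t)]
  have := pi_ne_zero
  field_simp
  rw [hρ]
  ring

lemma abs_K21clamped_le (hγ : IsArcLengthCurve γ) (t : ℝ) (x : ℝ × ℝ) (s : ℝ) :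
    |K21clamped γ t x s| ≤ π⁻¹ * (5 * (normalCoord γ x s / sqDist γ x s) ^ 2) := by
  rw [hγ.K21clamped_eq, abs_mul, abs_of_pos (inv_pos.2 pi_pos)]
  gcongr
  obtain hρ | hρ := (sqDist_nonneg γ x s).eq_or_lt
  · simp [← hρ]
  have first : |normalCoord γ x s ^ 2 - 3 * tangentCoord γ x s ^ 2| ≤ 3 * sqDist γ x s := by
    rw [hγ.sqDist_eq, abs_le]
    constructor <;> linarith [sq_nonneg (normalCoord γ x s), sq_nonneg (tangentCoord γ x s)]
  have second : 2 * |normalCoord γ x s * tangentCoord γ x s| ≤ sqDist γ x s := by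
    rw [hγ.sqDist_eq, abs_mul, ← sq_abs (normalCoord γ x s), ← sq_abs (tangentCoord γ x s),
      ← mul_assoc]
    exact two_mul_le_add_sq _ _
  have numerator : |dot2 (nor γ t) (nor γ s) *
        (normalCoord γ x s ^ 2 - 3 * tangentCoord γ x s ^ 2) +
      4 * dot2 (nor γ t) (tang γ s) * (normalCoord γ x s * tangentCoord γ x s)| ≤
        5 * sqDist γ x s := by
    refine (abs_add_le _ _).trans ?_
    rw [abs_mul, abs_mul, abs_mul, abs_of_pos (zero_lt_four' ℝ)]
    have h₁ := mul_le_mul (hγ.abs_dot2_nor_nor_le t s) first (abs_nonneg _) zero_le_one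
    have h₂ := mul_le_of_le_one_left (abs_nonneg (normalCoord γ x s * tangentCoord γ x s))
      (hγ.abs_dot2_nor_tang_le_one t s)
    linarith
  rw [abs_div, abs_mul, abs_of_nonneg (sq_nonneg (normalCoord γ x s)),
    abs_of_pos (pow_pos hρ 3), div_le_iff₀ (pow_pos hρ 3)]
  calc _ ≤ 5 * sqDist γ x s * normalCoord γ x s ^ 2 := by gcongr
    _ = _ := by field_simp

lemma measurable_K21clamped (hγ : IsArcLengthCurve γ) (t : ℝ) (x : ℝ × ℝ) :
    Measurable (K21clamped γ t x) := by
  have := (continuous_dot2 (continuous_const (y := nor γ t)) hγ.continuous_nor).measurable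
  have := (continuous_dot2 (continuous_const (y := nor γ t)) hγ.continuous_tang).measurable
  have := (hγ.continuous_normalCoord x).measurable
  have := (hγ.continuous_tangentCoord x).measurable
  have := (hγ.continuous_sqDist x).measurable
  rw [funext (hγ.K21clamped_eq t x)]
  fun_prop

lemma measurable_normalCoord_div_sqDist (hγ : IsArcLengthCurve γ) (x y : ℝ × ℝ) :
    Measurable fun s => normalCoord γ x s / sqDist γ y s :=
  (hγ.continuous_normalCoord x).measurable.div (hγ.continuous_sqDist y).measurable

lemma measurable_layerDensity (hγ : IsArcLengthCurve γ) (hσ : Continuous σ) (t : ℝ)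
    (x : ℝ × ℝ) : Measurable (layerDensity γ σ t x) := by
  have := (continuous_dot2 (continuous_const (y := nor γ t)) hγ.continuous_nor).measurable
  have := (continuous_dot2 (continuous_const (y := nor γ t)) hγ.continuous_tang).measurable
  have := hγ.continuous_curv.measurable
  have := hσ.measurable
  have := measurable_deriv σ
  exact measurable_doubleLayerDensity (hγ.continuous_normalCoord x).measurable
    (hγ.continuous_tangentCoord x).measurable (by fun_prop) (by fun_prop) (by fun_prop)

lemma hasDerivAt_boundaryTerm (hγ : IsArcLengthCurve γ) {x : ℝ × ℝ} {s : ℝ}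
    (hσ : DifferentiableAt ℝ σ s) (hx : x ≠ γ s) :
    HasDerivAt (boundaryTerm γ σ t x)
      (normalCoord γ x s / sqDist γ x s * layerDensity γ σ t x s
        - π * (K21clamped γ t x s * σ s)) s := by
  have ne : sqDist γ x s ≠ 0 := (sqDist_pos_iff.2 hx).ne'
  refine ((hσ.hasDerivAt.mul (hγ.hasDerivAt_dot2_nor (nor γ t) s)).mul
    ((((hγ.hasDerivAt_normalCoord x s).pow 2).mul (hγ.hasDerivAt_tangentCoord x s)).div
      ((hγ.hasDerivAt_sqDist x s).pow 2) (pow_ne_zero 2 ne))).congr_deriv ?_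
  rw [layerDensity, doubleLayerDensity, hγ.K21clamped_eq, ← hγ.sqDist_eq]
  simp only [Pi.mul_apply, Pi.pow_apply, Pi.div_apply]
  have := pi_ne_zero
  field_simp
  rw [hγ.sqDist_eq]
  ring

lemma continuousOn_boundaryTerm (hγ : IsArcLengthCurve γ) (hσ : Differentiable ℝ σ) {x : ℝ × ℝ}
    {M : ℝ} {I : Set ℝ} (ha : ∀ s ∈ I, |normalCoord γ x s / sqDist γ x s| ≤ M) :
    ContinuousOn (boundaryTerm γ σ t x) I := by
  intro s₀ _
  by_cases hx : x = γ s₀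
  · have dominated : ∀ s ∈ I, ‖boundaryTerm γ σ t x s‖ ≤ |σ s| * (M ^ 2 * |tangentCoord γ x s|) :=
      fun s hs => calc
        _ = |σ s| * |dot2 (nor γ t) (nor γ s)| *
            (|normalCoord γ x s / sqDist γ x s| ^ 2 * |tangentCoord γ x s|) := by
          rw [boundaryTerm, Real.norm_eq_abs, mul_div_right_comm, ← div_pow, abs_mul, abs_mul,
            abs_mul, abs_pow]
        _ ≤ |σ s| * 1 * (M ^ 2 * |tangentCoord γ x s|) := by
          gcongr
          exacts [hγ.abs_dot2_nor_nor_le t s, ha s hs]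
        _ = _ := by rw [mul_one]
    have bound_tendsto : Tendsto (fun s => |σ s| * (M ^ 2 * |tangentCoord γ x s|)) (𝓝[I] s₀)
        (𝓝 0) := by
      have := hσ.continuous
      have := hγ.continuous_tangentCoord x
      exact tendsto_nhdsWithin_of_tendsto_nhds
        (Continuous.tendsto' (by fun_prop) _ _ (by simp [hx]))
    rw [ContinuousWithinAt, show boundaryTerm γ σ t x s₀ = 0 by simp [boundaryTerm, hx]]
    exact squeeze_zero_norm' (eventually_nhdsWithin_of_forall dominated) bound_tendsto
  · exact (hγ.hasDerivAt_boundaryTerm (hσ s₀) hx).continuousAt.continuousWithinAt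

lemma tendsto_div_sqDist_mul_layerDensity (hγ : IsArcLengthCurve γ) {s : ℝ} (k : ℝ)
    (hs : γ t ≠ γ s) :
    Tendsto (fun h => k / sqDist γ (normalPoint γ t h) s * layerDensity γ σ t (normalPoint γ t h) s)
      (𝓝 0) (𝓝 (k / sqDist γ (γ t) s * layerDensity γ σ t (γ t) s)) := by
  have ne : sqDist γ (γ t) s ≠ 0 := (sqDist_pos_iff.2 hs).ne'
  have point : Continuous (normalPoint γ t) := by unfold normalPoint; fun_prop
  have limit {f : ℝ × ℝ → ℝ} (hf : Continuous f) :
      Tendsto (fun h => f (normalPoint γ t h)) (𝓝 0) (𝓝 (f (γ t))) :=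
    (hf.comp point).tendsto' _ _ (by simp)
  have ha := limit (f := (normalCoord γ · s)) (by unfold normalCoord dot2; fun_prop)
  have hb := limit (f := (tangentCoord γ · s)) (by unfold tangentCoord dot2; fun_prop)
  have hρ := limit (f := (sqDist γ · s)) (by unfold sqDist dot2; fun_prop)
  exact (tendsto_const_nhds.div hρ ne).mul (tendsto_doubleLayerDensity ha hb tendsto_const_nhds
    tendsto_const_nhds tendsto_const_nhds (by rwa [← hγ.sqDist_eq]))

lemma intervalIntegrable_mul_layerDensity (hγ : IsArcLengthCurve γ) (hσ : Continuous σ)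
    {x : ℝ × ℝ} {f : ℝ → ℝ} {M D : ℝ} (hαβ : α ≤ β) (hf : Measurable f)
    (hM : ∀ s ∈ Set.Icc α β, |f s| ≤ M) (hX : ∀ s ∈ Set.Icc α β, |layerDensity γ σ t x s| ≤ D) :
    IntervalIntegrable (fun s => f s * layerDensity γ σ t x s) volume α β := by
  refine intervalIntegrable_of_abs_le hαβ (hf.mul (hγ.measurable_layerDensity hσ t x))
    (M := M * D) fun s hs => ?_
  rw [abs_mul]
  exact mul_le_mul (hM s hs) (hX s hs) (abs_nonneg _) ((abs_nonneg _).trans (hM s hs))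

lemma integral_K21clamped_eq (hγ : IsArcLengthCurve γ) (hσ : Differentiable ℝ σ) {x : ℝ × ℝ}
    {M D : ℝ} (hαβ : α ≤ β) (countable : (γ ⁻¹' {x} ∩ Set.Icc α β).Countable)
    (ha : ∀ s ∈ Set.Icc α β, |normalCoord γ x s / sqDist γ x s| ≤ M)
    (hX : ∀ s ∈ Set.Icc α β, |layerDensity γ σ t x s| ≤ D)
    (endpoints : boundaryTerm γ σ t x α = boundaryTerm γ σ t x β) :
    ∫ s in α..β, K21clamped γ t x s * σ s =
      π⁻¹ * ∫ s in α..β, normalCoord γ x s / sqDist γ x s * layerDensity γ σ t x s := by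
  have K_integrable : IntervalIntegrable (fun s => K21clamped γ t x s * σ s) volume α β := by
    refine IntervalIntegrable.mul_continuousOn (intervalIntegrable_of_abs_le hαβ
      (hγ.measurable_K21clamped t x) (M := π⁻¹ * (5 * M ^ 2)) fun s hs => ?_)
      hσ.continuous.continuousOn
    refine (hγ.abs_K21clamped_le t x s).trans ?_
    rw [← sq_abs (_ / _)]
    gcongr
    exact ha s hs
  have double_layer_integrable := hγ.intervalIntegrable_mul_layerDensity hσ.continuous hαβ
    (hγ.measurable_normalCoord_div_sqDist x x) ha hX
  have fundamental := integral_eq_of_hasDerivAt_off_countable_of_le (boundaryTerm γ σ t x) _ hαβ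
    countable (hγ.continuousOn_boundaryTerm hσ ha)
    (fun s hs => hγ.hasDerivAt_boundaryTerm (hσ s) fun hx =>
      hs.2 ⟨hx.symm, Set.Ioo_subset_Icc_self hs.1⟩)
    (double_layer_integrable.sub (K_integrable.const_mul π))
  rw [intervalIntegral.integral_sub double_layer_integrable (K_integrable.const_mul π),
    intervalIntegral.integral_const_mul, endpoints, sub_self, sub_eq_zero] at fundamental
  rw [fundamental, inv_mul_cancel_left₀ pi_ne_zero]

end IsArcLengthCurve

namespace NormalLineSeparated

variable {γ : ℝ → ℝ × ℝ} {σ : ℝ → ℝ} {t h h₀ c C α β s : ℝ} {I : Set ℝ}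

lemma mul_sq_sub_le_sqDist (sep : NormalLineSeparated γ t h₀ c I) (hh : |h| < h₀) (hs : s ∈ I) :
    c * (s - t) ^ 2 ≤ sqDist γ (normalPoint γ t h) s := by
  have := sep.mul_le_sqDist h hh s hs
  have := mul_nonneg sep.c_pos.le (sq_nonneg h)
  linarith

lemma mul_sq_le_sqDist (sep : NormalLineSeparated γ t h₀ c I) (hh : |h| < h₀) (hs : s ∈ I) :
    c * h ^ 2 ≤ sqDist γ (normalPoint γ t h) s := by
  have := sep.mul_le_sqDist h hh s hs
  have := mul_nonneg sep.c_pos.le (sq_nonneg (s - t))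
  linarith

lemma normalPoint_ne_of_ne_zero (sep : NormalLineSeparated γ t h₀ c I) (hh : |h| < h₀)
    (hs : s ∈ I) (ne : h ≠ 0) : normalPoint γ t h ≠ γ s :=
  sqDist_pos_iff.1 ((mul_pos sep.c_pos (by positivity)).trans_le (sep.mul_sq_le_sqDist hh hs))

lemma normalPoint_ne_of_ne (sep : NormalLineSeparated γ t h₀ c I) (hh : |h| < h₀)
    (hs : s ∈ I) (ne : s ≠ t) : normalPoint γ t h ≠ γ s :=
  sqDist_pos_iff.1 ((mul_pos sep.c_pos (sq_pos_of_ne_zero (sub_ne_zero.2 ne))).trans_le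
    (sep.mul_sq_sub_le_sqDist hh hs))

lemma abs_normalCoord_div_sqDist_le (sep : NormalLineSeparated γ t h₀ c I)
    (hγ : IsArcLengthCurve γ) (hC : ∀ s, |curv γ s| ≤ C) (hh : |h| < h₀) (hs : s ∈ I) :
    |normalCoord γ (γ t) s / sqDist γ (normalPoint γ t h) s| ≤ C / c := by
  have C_nonneg : 0 ≤ C := (abs_nonneg _).trans (hC t)
  have c_pos := sep.c_pos
  rw [abs_div, abs_of_nonneg (sqDist_nonneg _ _ _)]
  refine div_le_of_le_mul₀ (sqDist_nonneg _ _ _) (by positivity) ?_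
  calc |normalCoord γ (γ t) s| ≤ C * (s - t) ^ 2 := hγ.abs_normalCoord_le hC t s
    _ = C / c * (c * (s - t) ^ 2) := by field_simp
    _ ≤ C / c * sqDist γ (normalPoint γ t h) s := by
      gcongr
      exact sep.mul_sq_sub_le_sqDist hh hs

lemma abs_normalCoord_normalPoint_div_sqDist_le (sep : NormalLineSeparated γ t h₀ c I)
    (hγ : IsArcLengthCurve γ) (hC : ∀ s, |curv γ s| ≤ C) (hh : |h| < h₀) (hs : s ∈ I) :
    |normalCoord γ (normalPoint γ t h) s / sqDist γ (normalPoint γ t h) s|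
      ≤ C / c + (c * |h|)⁻¹ := by
  have c_pos := sep.c_pos
  have shift : |h * dot2 (nor γ t) (nor γ s) / sqDist γ (normalPoint γ t h) s| ≤ (c * |h|)⁻¹ := by
    obtain rfl | ne := eq_or_ne h 0
    · simp
    rw [abs_div, abs_of_nonneg (sqDist_nonneg _ _ _)]
    refine div_le_of_le_mul₀ (sqDist_nonneg _ _ _) (by positivity) ?_
    calc |h * dot2 (nor γ t) (nor γ s)| ≤ |h| := by
          rw [abs_mul]
          exact mul_le_of_le_one_right (abs_nonneg h) (hγ.abs_dot2_nor_nor_le t s)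
      _ = (c * |h|)⁻¹ * (c * h ^ 2) := by
        have := abs_pos.2 ne
        rw [← sq_abs]
        field_simp
      _ ≤ (c * |h|)⁻¹ * sqDist γ (normalPoint γ t h) s := by
        gcongr
        exact sep.mul_sq_le_sqDist hh hs
  rw [normalCoord_normalPoint, add_div]
  exact (abs_add_le _ _).trans (add_le_add (sep.abs_normalCoord_div_sqDist_le hγ hC hh hs) shift)

lemma sq_dot2_nor_tang_le (sep : NormalLineSeparated γ t h₀ c I) (hγ : IsArcLengthCurve γ)
    (hC : ∀ s, |curv γ s| ≤ C) (hh : |h| < h₀) (hs : s ∈ I) :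
    dot2 (nor γ t) (tang γ s) ^ 2 ≤ C ^ 2 / c * sqDist γ (normalPoint γ t h) s := by
  have c_pos := sep.c_pos
  calc dot2 (nor γ t) (tang γ s) ^ 2 = |dot2 (nor γ t) (tang γ s)| ^ 2 := (sq_abs _).symm
    _ ≤ (C * |s - t|) ^ 2 := by
      gcongr
      exact hγ.abs_dot2_nor_tang_le hC t s
    _ = C ^ 2 / c * (c * (s - t) ^ 2) := by
      rw [mul_pow, sq_abs]
      field_simp
    _ ≤ C ^ 2 / c * sqDist γ (normalPoint γ t h) s := by
      gcongr
      exact sep.mul_sq_sub_le_sqDist hh hs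

lemma exists_abs_layerDensity_le (sep : NormalLineSeparated γ t h₀ c I)
    (hγ : IsArcLengthCurve γ) (hC : ∀ s, |curv γ s| ≤ C) (hσ : ContDiff ℝ 1 σ)
    (hI : IsCompact I) :
    ∃ D, ∀ h, |h| < h₀ → ∀ s ∈ I, |layerDensity γ σ t (normalPoint γ t h) s| ≤ D := by
  obtain ⟨S, hS⟩ := hI.exists_bound_of_continuousOn hσ.continuous.continuousOn
  obtain ⟨S₁, hS₁⟩ := hI.exists_bound_of_continuousOn hσ.continuous_deriv_one.continuousOn
  refine ⟨S₁ + S * C + 2 * (C * S) + 4 * (S * C / √c), fun h hh s hs => ?_⟩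
  replace hS : |σ s| ≤ S := hS s hs
  replace hS₁ : |deriv σ s| ≤ S₁ := hS₁ s hs
  have C_nonneg : 0 ≤ C := (abs_nonneg _).trans (hC t)
  have S_nonneg : 0 ≤ S := (abs_nonneg _).trans hS
  have S₁_nonneg : 0 ≤ S₁ := (abs_nonneg _).trans hS₁
  have hN := hγ.abs_dot2_nor_nor_le t s
  have hd := hγ.abs_dot2_nor_tang_le_one t s
  have hκ := hC s
  have hm : |curv γ s * σ s * dot2 (nor γ t) (nor γ s)| ≤ C * S := by
    rw [abs_mul, abs_mul, ← mul_one (C * S)]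
    gcongr
  have hφ : |deriv σ s * dot2 (nor γ t) (nor γ s)
      + σ s * (curv γ s * dot2 (nor γ t) (tang γ s))| ≤ S₁ + S * C := by
    refine (abs_add_le _ _).trans ?_
    rw [abs_mul, abs_mul, abs_mul, ← mul_one S₁, ← mul_one C]
    gcongr
  have hδ : (σ s * dot2 (nor γ t) (tang γ s)) ^ 2 ≤ (S * C / √c) ^ 2 *
      (normalCoord γ (normalPoint γ t h) s ^ 2 + tangentCoord γ (normalPoint γ t h) s ^ 2) := by
    rw [← hγ.sqDist_eq, mul_pow, ← sq_abs (σ s), div_pow, sq_sqrt sep.c_pos.le, mul_pow S,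
      mul_div_assoc, mul_assoc]
    gcongr
    exact sep.sq_dot2_nor_tang_le hγ hC hh hs
  exact (abs_doubleLayerDensity_le _ _ (by positivity) hδ).trans (by gcongr)

lemma integral_K21clamped_eq (sep : NormalLineSeparated γ t h₀ c (Set.Icc α β))
    (hγ : IsArcLengthCurve γ) (hC : ∀ s, |curv γ s| ≤ C) (hσ : ContDiff ℝ 1 σ) (hαβ : α ≤ β)
    (hh : |h| < h₀) (endpoints : boundaryTerm γ σ t (normalPoint γ t h) α =
      boundaryTerm γ σ t (normalPoint γ t h) β) :
    ∫ s in α..β, K21clamped γ t (normalPoint γ t h) s * σ s = π⁻¹ *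
      ((∫ s in α..β, normalCoord γ (γ t) s / sqDist γ (normalPoint γ t h) s *
          layerDensity γ σ t (normalPoint γ t h) s) +
        ∫ s in α..β, h * dot2 (nor γ t) (nor γ s) / sqDist γ (normalPoint γ t h) s *
          layerDensity γ σ t (normalPoint γ t h) s) := by
  obtain ⟨D, hD⟩ := sep.exists_abs_layerDensity_le hγ hC hσ isCompact_Icc
  have bound : ∀ s ∈ Set.Icc α β,
      |normalCoord γ (normalPoint γ t h) s / sqDist γ (normalPoint γ t h) s|
        ≤ C / c + (c * |h|)⁻¹ :=
    fun s hs => sep.abs_normalCoord_normalPoint_div_sqDist_le hγ hC hh hs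
  have countable : (γ ⁻¹' {normalPoint γ t h} ∩ Set.Icc α β).Countable := by
    refine (Set.countable_singleton t).mono fun s hs => ?_
    by_contra ne
    exact sep.normalPoint_ne_of_ne hh hs.2 ne hs.1.symm
  have split := intervalIntegral.integral_sub
    (hγ.intervalIntegrable_mul_layerDensity hσ.continuous hαβ
      (hγ.measurable_normalCoord_div_sqDist _ _) bound (hD h hh))
    (hγ.intervalIntegrable_mul_layerDensity hσ.continuous hαβ
      (hγ.measurable_normalCoord_div_sqDist _ _)
      (fun s hs => sep.abs_normalCoord_div_sqDist_le hγ hC hh hs) (hD h hh))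
  simp only [← sub_mul, ← sub_div, normalCoord_normalPoint, add_sub_cancel_left] at split
  rw [hγ.integral_K21clamped_eq (hσ.differentiable one_ne_zero) hαβ countable bound (hD h hh)
    endpoints, split]
  simp only [normalCoord_normalPoint, add_sub_cancel]

lemma tendsto_integral_regular_part (sep : NormalLineSeparated γ t h₀ c (Set.Icc α β))
    (hγ : IsArcLengthCurve γ) (hC : ∀ s, |curv γ s| ≤ C) (hσ : ContDiff ℝ 1 σ) (hαβ : α ≤ β) :
    Tendsto (fun h => ∫ s in α..β, normalCoord γ (γ t) s / sqDist γ (normalPoint γ t h) s *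
        layerDensity γ σ t (normalPoint γ t h) s) (𝓝 0)
      (𝓝 (∫ s in α..β, normalCoord γ (γ t) s / sqDist γ (γ t) s * layerDensity γ σ t (γ t) s)) := by
  obtain ⟨D, hD⟩ := sep.exists_abs_layerDensity_le hγ hC hσ isCompact_Icc
  have small : ∀ᶠ h in 𝓝 (0 : ℝ), |h| < h₀ :=
    continuous_abs.tendsto' 0 0 abs_zero |>.eventually_lt_const sep.h₀_pos
  refine intervalIntegral.tendsto_integral_filter_of_dominated_convergence (fun _ => C / c * D)
    (Eventually.of_forall fun h => ?_) ?_ intervalIntegrable_const ?_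
  · exact ((hγ.measurable_normalCoord_div_sqDist _ _).mul
      (hγ.measurable_layerDensity hσ.continuous t _)).aestronglyMeasurable
  · filter_upwards [small] with h hh
    refine Eventually.of_forall fun s hs => ?_
    rw [Set.uIoc_of_le hαβ] at hs
    have hs := Set.Ioc_subset_Icc_self hs
    have bound := sep.abs_normalCoord_div_sqDist_le hγ hC hh hs
    rw [norm_mul]
    exact mul_le_mul bound (hD h hh s hs) (abs_nonneg _) ((abs_nonneg _).trans bound)
  · filter_upwards [Measure.ae_ne volume t] with s hst hs
    rw [Set.uIoc_of_le hαβ] at hs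
    refine hγ.tendsto_div_sqDist_mul_layerDensity _ ?_
    simpa using sep.normalPoint_ne_of_ne (abs_zero.trans_lt sep.h₀_pos)
      (Set.Ioc_subset_Icc_self hs) hst

end NormalLineSeparated

section Rescaling

lemma tendsto_comp_add_mul_const {f : ℝ → ℝ} {t : ℝ} (hf : ContinuousAt f t) (v : ℝ) :
    Tendsto (fun η => f (t + η * v)) (𝓝[>] 0) (𝓝 (f t)) :=
  hf.tendsto.comp (tendsto_nhdsWithin_of_tendsto_nhds
    (Continuous.tendsto' (by fun_prop) _ _ (by simp)))

lemma tendsto_inv_mul_comp_add_mul_const {f : ℝ → ℝ} {f' t : ℝ} (hf : HasDerivAt f f' t)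
    (zero : f t = 0) (v : ℝ) :
    Tendsto (fun η => η⁻¹ * f (t + η * v)) (𝓝[>] 0) (𝓝 (f' * v)) := by
  have line : HasDerivAt (fun η : ℝ => t + η * v) v 0 := by
    simpa using ((hasDerivAt_id (0 : ℝ)).mul_const v).const_add t
  have along : HasDerivAt (fun η => f (t + η * v)) (f' * v) 0 :=
    HasDerivAt.comp 0 (by simpa using hf) line
  simpa [zero] using along.tendsto_slope_zero_right

namespace IsArcLengthCurve

variable {γ : ℝ → ℝ × ℝ} {σ : ℝ → ℝ} {e : ℝ}

lemma tendsto_inv_mul_normalCoord (hγ : IsArcLengthCurve γ) (t e v : ℝ) :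
    Tendsto (fun η => η⁻¹ * normalCoord γ (normalPoint γ t (e * η)) (t + η * v)) (𝓝[>] 0)
      (𝓝 e) := by
  have base := tendsto_inv_mul_comp_add_mul_const (hγ.hasDerivAt_normalCoord (γ t) t)
    (normalCoord_self γ t) v
  have shift := (tendsto_comp_add_mul_const
    (hγ.hasDerivAt_dot2_nor (nor γ t) t).continuousAt v).const_mul e
  simp only [tangentCoord_self, mul_zero, zero_mul, hγ.dot2_nor_self, mul_one] at base shift
  refine (zero_add e ▸ base.add shift).congr' ?_
  filter_upwards [self_mem_nhdsWithin] with η (hη : 0 < η)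
  rw [normalCoord_normalPoint]
  field_simp

lemma tendsto_inv_mul_tangentCoord (hγ : IsArcLengthCurve γ) (t e v : ℝ) :
    Tendsto (fun η => η⁻¹ * tangentCoord γ (normalPoint γ t (e * η)) (t + η * v)) (𝓝[>] 0)
      (𝓝 (-v)) := by
  have base := tendsto_inv_mul_comp_add_mul_const (hγ.hasDerivAt_tangentCoord (γ t) t)
    (tangentCoord_self γ t) v
  have shift := (tendsto_comp_add_mul_const
    (hγ.hasDerivAt_dot2_tang (nor γ t) t).continuousAt v).const_mul e
  simp only [normalCoord_self, mul_zero, sub_zero, neg_one_mul, dot2_nor_tang_self] at base shift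
  refine (add_zero (-v) ▸ base.add shift).congr' ?_
  filter_upwards [self_mem_nhdsWithin] with η (hη : 0 < η)
  rw [tangentCoord_normalPoint]
  field_simp

lemma tendsto_inv_mul_dot2_nor_tang (hγ : IsArcLengthCurve γ) (t v : ℝ) :
    Tendsto (fun η => η⁻¹ * dot2 (nor γ t) (tang γ (t + η * v))) (𝓝[>] 0)
      (𝓝 (-curv γ t * v)) := by
  simpa [hγ.dot2_nor_self] using tendsto_inv_mul_comp_add_mul_const
    (hγ.hasDerivAt_dot2_tang (nor γ t) t) (dot2_nor_tang_self γ t) v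

lemma tendsto_sq_div_sqDist (hγ : IsArcLengthCurve γ) (he : e ^ 2 = 1) (t v : ℝ) :
    Tendsto (fun η => η ^ 2 / sqDist γ (normalPoint γ t (e * η)) (t + η * v)) (𝓝[>] 0)
      (𝓝 (1 + v ^ 2)⁻¹) := by
  have scaled := ((hγ.tendsto_inv_mul_normalCoord t e v).pow 2).add
    ((hγ.tendsto_inv_mul_tangentCoord t e v).pow 2)
  rw [he, neg_sq] at scaled
  refine (scaled.inv₀ (by positivity)).congr fun η => ?_
  rw [hγ.sqDist_eq, mul_pow, mul_pow, ← mul_add, mul_inv, inv_pow, inv_inv, div_eq_mul_inv]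

lemma tendsto_layerDensity (hγ : IsArcLengthCurve γ) (hσ : ContDiff ℝ 1 σ) (he : e ^ 2 = 1)
    (t v : ℝ) :
    Tendsto (fun η => layerDensity γ σ t (normalPoint γ t (e * η)) (t + η * v)) (𝓝[>] 0)
      (𝓝 (doubleLayerDensity e (-v) (-(curv γ t * σ t) * v) (curv γ t * σ t) (deriv σ t))) := by
  have hσ₀ := tendsto_comp_add_mul_const (t := t) hσ.continuous.continuousAt v
  have hσ₁ := tendsto_comp_add_mul_const (t := t) hσ.continuous_deriv_one.continuousAt v
  have hκ := tendsto_comp_add_mul_const (t := t) hγ.continuous_curv.continuousAt v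
  have hN := tendsto_comp_add_mul_const (hγ.hasDerivAt_dot2_nor (nor γ t) t).continuousAt v
  have hd := tendsto_comp_add_mul_const (hγ.hasDerivAt_dot2_tang (nor γ t) t).continuousAt v
  rw [hγ.dot2_nor_self] at hN
  rw [dot2_nor_tang_self] at hd
  have hδ := hσ₀.mul (hγ.tendsto_inv_mul_dot2_nor_tang t v)
  have hm := (hκ.mul hσ₀).mul hN
  have hφ := (hσ₁.mul hN).add (hσ₀.mul (hκ.mul hd))
  rw [show σ t * (-curv γ t * v) = -(curv γ t * σ t) * v by ring] at hδ
  simp only [mul_one, mul_zero, add_zero] at hm hφ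
  refine (tendsto_doubleLayerDensity (hγ.tendsto_inv_mul_normalCoord t e v)
    (hγ.tendsto_inv_mul_tangentCoord t e v) hδ hm hφ (by rw [he]; positivity)).congr' ?_
  filter_upwards [self_mem_nhdsWithin] with η (hη : 0 < η)
  rw [mul_left_comm (σ _), doubleLayerDensity_mul (inv_ne_zero hη.ne'), layerDensity]

lemma tendsto_jumpProfile (hγ : IsArcLengthCurve γ) (hσ : ContDiff ℝ 1 σ) (he : e ^ 2 = 1)
    (t v : ℝ) :
    Tendsto (fun η => e * dot2 (nor γ t) (nor γ (t + η * v)) *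
        (η ^ 2 / sqDist γ (normalPoint γ t (e * η)) (t + η * v) *
          layerDensity γ σ t (normalPoint γ t (e * η)) (t + η * v))) (𝓝[>] 0)
      (𝓝 (e * jumpProfile e (curv γ t * σ t) (deriv σ t) v)) := by
  have hN := tendsto_comp_add_mul_const (hγ.hasDerivAt_dot2_nor (nor γ t) t).continuousAt v
  rw [hγ.dot2_nor_self] at hN
  convert (hN.const_mul e).mul
    ((hγ.tendsto_sq_div_sqDist he t v).mul (hγ.tendsto_layerDensity hσ he t v)) using 2
  rw [jumpProfile, mul_one, div_eq_inv_mul]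

end IsArcLengthCurve

end Rescaling

namespace NormalLineSeparated

variable {γ : ℝ → ℝ × ℝ} {σ : ℝ → ℝ} {t h₀ c C e α β η v : ℝ} {I : Set ℝ}

lemma sq_div_sqDist_le (sep : NormalLineSeparated γ t h₀ c I) (he : e ^ 2 = 1) (hη : η ≠ 0)
    (hh : |e * η| < h₀) (hv : t + η * v ∈ I) :
    η ^ 2 / sqDist γ (normalPoint γ t (e * η)) (t + η * v) ≤ (c * (1 + v ^ 2))⁻¹ := by
  have c_pos := sep.c_pos
  have scaled_dist : η ^ 2 * (c * (1 + v ^ 2)) ≤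
      sqDist γ (normalPoint γ t (e * η)) (t + η * v) := by
    convert sep.mul_le_sqDist _ hh _ hv using 1
    rw [mul_pow, he]
    ring
  rw [div_le_iff₀ ((by positivity : 0 < η ^ 2 * (c * (1 + v ^ 2))).trans_le scaled_dist),
    ← div_eq_inv_mul, le_div_iff₀ (by positivity)]
  exact scaled_dist

lemma tendsto_integral_concentrating_part (sep : NormalLineSeparated γ t h₀ c (Set.Icc α β))
    (hγ : IsArcLengthCurve γ) (hC : ∀ s, |curv γ s| ≤ C) (hσ : ContDiff ℝ 1 σ)
    (hα : α < t) (hβ : t < β) (he : e ^ 2 = 1) :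
    Tendsto (fun η => ∫ s in α..β, e * η * dot2 (nor γ t) (nor γ s) /
        sqDist γ (normalPoint γ t (e * η)) s * layerDensity γ σ t (normalPoint γ t (e * η)) s)
      (𝓝[>] 0) (𝓝 (e * (π * (curv γ t * σ t)))) := by
  obtain ⟨D, hD⟩ := sep.exists_abs_layerDensity_le hγ hC hσ isCompact_Icc
  have D_nonneg : 0 ≤ D := (abs_nonneg _).trans
    (hD 0 (abs_zero.trans_lt sep.h₀_pos) t ⟨hα.le, hβ.le⟩)
  have c_pos := sep.c_pos
  have abs_e : |e| = 1 := by rwa [← sq_eq_sq₀ (abs_nonneg e) zero_le_one, sq_abs, one_pow]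
  have rescaled (η v : ℝ) : η • (e * η * dot2 (nor γ t) (nor γ (t + η * v)) /
      sqDist γ (normalPoint γ t (e * η)) (t + η * v) *
        layerDensity γ σ t (normalPoint γ t (e * η)) (t + η * v)) =
      e * dot2 (nor γ t) (nor γ (t + η * v)) *
        (η ^ 2 / sqDist γ (normalPoint γ t (e * η)) (t + η * v) *
          layerDensity γ σ t (normalPoint γ t (e * η)) (t + η * v)) := by
    rw [smul_eq_mul]
    ring
  rw [← integral_jumpProfile he (curv γ t * σ t) (deriv σ t), ← integral_const_mul]
  refine tendsto_intervalIntegral_of_rescaled (bound := fun v => (c * (1 + v ^ 2))⁻¹ * D) hα hβ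
    (fun η => ?_) (fun v => by positivity) ?_ ?_ (fun v => ?_)
  · have := (continuous_dot2 (continuous_const (y := nor γ t)) hγ.continuous_nor).measurable
    have := (hγ.continuous_sqDist (normalPoint γ t (e * η))).measurable
    have := hγ.measurable_layerDensity hσ.continuous t (normalPoint γ t (e * η))
    exact Measurable.stronglyMeasurable (by fun_prop)
  · filter_upwards [Ioo_mem_nhdsGT sep.h₀_pos] with η ⟨hη, hηh₀⟩ v hv
    have hh : |e * η| < h₀ := by rwa [abs_mul, abs_e, one_mul, abs_of_pos hη]
    rw [rescaled, norm_mul, norm_mul, norm_mul, Real.norm_eq_abs, Real.norm_eq_abs, abs_e, one_mul,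
      Real.norm_of_nonneg (div_nonneg (sq_nonneg η) (sqDist_nonneg _ _ _))]
    refine (mul_le_of_le_one_left (mul_nonneg (div_nonneg (sq_nonneg η)
      (sqDist_nonneg _ _ _)) (norm_nonneg _)) (hγ.abs_dot2_nor_nor_le _ _)).trans ?_
    gcongr
    · exact sep.sq_div_sqDist_le he hη.ne' hh hv
    · exact hD _ hh _ hv
  · simp only [mul_inv]
    exact (integrable_inv_one_add_sq.const_mul _).mul_const _
  · simp only [rescaled]
    exact hγ.tendsto_jumpProfile hσ he t v

theorem tendsto_integral_K21clamped (sep : NormalLineSeparated γ t h₀ c (Set.Icc α β))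
    (hγ : IsArcLengthCurve γ) (hC : ∀ s, |curv γ s| ≤ C) (hσ : ContDiff ℝ 1 σ)
    (hα : α < t) (hβ : t < β)
    (endpoints : ∀ x, boundaryTerm γ σ t x α = boundaryTerm γ σ t x β) (he : e ^ 2 = 1) :
    Tendsto (fun η => ∫ s in α..β, K21clamped γ t (normalPoint γ t (e * η)) s * σ s) (𝓝[>] 0)
      (𝓝 (e * (curv γ t * σ t) + ∫ s in α..β, K21clamped γ t (γ t) s * σ s)) := by
  have hαβ := (hα.trans hβ).le
  have approach : Tendsto (fun η => e * η) (𝓝[>] 0) (𝓝 0) :=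
    tendsto_nhdsWithin_of_tendsto_nhds (Continuous.tendsto' (by fun_prop) _ _ (by simp))
  have at_zero := sep.integral_K21clamped_eq hγ hC hσ hαβ (abs_zero.trans_lt sep.h₀_pos)
    (endpoints _)
  simp only [normalPoint_zero, zero_mul, zero_div, intervalIntegral.integral_zero, add_zero]
    at at_zero
  have limit := (((sep.tendsto_integral_regular_part hγ hC hσ hαβ).comp approach).add
    (sep.tendsto_integral_concentrating_part hγ hC hσ hα hβ he)).const_mul π⁻¹
  rw [mul_add, ← at_zero, mul_left_comm e, inv_mul_cancel_left₀ pi_ne_zero, add_comm] at limit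
  refine limit.congr' ?_
  filter_upwards [approach.abs.eventually_lt_const (abs_zero.trans_lt sep.h₀_pos)] with η hη
  exact (sep.integral_K21clamped_eq hγ hC hσ hαβ hη (endpoints _)).symm

end NormalLineSeparated

lemma periodic_deriv {E : Type*} [NormedAddCommGroup E] [NormedSpace ℝ E] {f : ℝ → E} {L : ℝ}
    (hf : Function.Periodic f L) : Function.Periodic (deriv f) L := fun s => by
  rw [← deriv_comp_add_const, funext hf]

lemma exists_abs_le_of_periodic {f : ℝ → ℝ} {L : ℝ} (hf : Function.Periodic f L) (hL : L ≠ 0)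
    (continuous : Continuous f) : ∃ M, ∀ s, |f s| ≤ M :=
  (hf.isBounded_of_continuous hL continuous).exists_norm_le.imp fun _ hM s => hM _ ⟨s, rfl⟩

lemma eq_of_periodic_of_injOn_Ico {X : Type*} {f : ℝ → X} {L : ℝ} (hf : Function.Periodic f L)
    (hL : 0 < L) (inj : Set.InjOn f (Set.Ico 0 L)) {s t : ℝ} (hst : f s = f t)
    (close : |s - t| < L) : s = t := by
  have mem (u : ℝ) : toIcoMod hL 0 u ∈ Set.Ico 0 L := by simpa using toIcoMod_mem_Ico hL 0 u
  have value (u : ℝ) : f (toIcoMod hL 0 u) = f u := hf.sub_zsmul_eq _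
  obtain ⟨n, hn⟩ := (toIcoMod_eq_toIcoMod hL).1
    (inj (mem t) (mem s) (by rw [value, value, hst]))
  rw [hn, zsmul_eq_mul, abs_mul, abs_of_pos hL, mul_lt_iff_lt_one_left hL] at close
  have n_zero : n = 0 := Int.abs_lt_one_iff.1 (by exact_mod_cast close)
  rwa [n_zero, zero_zsmul, sub_eq_zero] at hn

/-- A simple closed curve of length `L`, parametrized periodically by arc length. -/
structure IsSimpleClosedCurve (γ : ℝ → ℝ × ℝ) (L : ℝ) : Prop extends IsArcLengthCurve γ where
  length_pos : 0 < L
  periodic : Function.Periodic γ L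
  injOn : Set.InjOn γ (Set.Ico 0 L)

namespace IsSimpleClosedCurve

variable {γ : ℝ → ℝ × ℝ} {σ : ℝ → ℝ} {L t h h₀ c e : ℝ}

lemma exists_abs_curv_le (hγ : IsSimpleClosedCurve γ L) : ∃ C, ∀ s, |curv γ s| ≤ C := by
  have periodic_tang := periodic_deriv hγ.periodic
  refine exists_abs_le_of_periodic (fun s => ?_) hγ.length_pos.ne' hγ.continuous_curv
  simp only [curv, nor, periodic_tang s, periodic_deriv periodic_tang s]

lemma periodic_K21clamped_mul (hγ : IsSimpleClosedCurve γ L) (hσ : Function.Periodic σ L) (t : ℝ)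
    (x : ℝ × ℝ) : Function.Periodic (fun s => K21clamped γ t x s * σ s) L := fun s => by
  simp only [K21clamped, nor, tang, hγ.periodic s, periodic_deriv hγ.periodic s, hσ s]

lemma periodic_boundaryTerm (hγ : IsSimpleClosedCurve γ L) (hσ : Function.Periodic σ L) (t : ℝ)
    (x : ℝ × ℝ) : Function.Periodic (boundaryTerm γ σ t x) L := fun s => by
  simp only [boundaryTerm, normalCoord, tangentCoord, sqDist, nor, tang, hγ.periodic s,
    periodic_deriv hγ.periodic s, hσ s]

lemma exists_normalLineSeparated (hγ : IsSimpleClosedCurve γ L) (t : ℝ) :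
    ∃ h₀ c, NormalLineSeparated γ t h₀ c (Set.Icc (t - L / 2) (t - L / 2 + L)) := by
  obtain ⟨C, hC⟩ := hγ.exists_abs_curv_le
  have L_pos := hγ.length_pos
  refine hγ.toIsArcLengthCurve.exists_normalLineSeparated hC isCompact_Icc fun s hs hst => ?_
  refine eq_of_periodic_of_injOn_Ico hγ.periodic L_pos hγ.injOn hst (abs_lt.2 ⟨?_, ?_⟩) <;>
    linarith [hs.1, hs.2]

lemma normalPoint_ne (hγ : IsSimpleClosedCurve γ L) {α : ℝ}
    (sep : NormalLineSeparated γ t h₀ c (Set.Icc α (α + L))) (h_ne : h ≠ 0) (hh : |h| < h₀)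
    (s : ℝ) : normalPoint γ t h ≠ γ s := by
  obtain ⟨u, hu, value⟩ := hγ.periodic.exists_mem_Ico hγ.length_pos s α
  rw [value]
  exact sep.normalPoint_ne_of_ne_zero hh (Set.Ico_subset_Icc_self hu) h_ne

lemma exists_abs_K21clamped_mul_le (hγ : IsSimpleClosedCurve γ L) (hσ : Continuous σ)
    (hσL : Function.Periodic σ L) (t : ℝ) : ∃ M, ∀ s, |K21clamped γ t (γ t) s * σ s| ≤ M := by
  obtain ⟨C, hC⟩ := hγ.exists_abs_curv_le
  obtain ⟨S, hS⟩ := exists_abs_le_of_periodic hσL hγ.length_pos.ne' hσ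
  obtain ⟨h₀, c, sep⟩ := hγ.exists_normalLineSeparated t
  refine ⟨π⁻¹ * (5 * (C / c) ^ 2) * S, fun s => ?_⟩
  obtain ⟨u, hu, value⟩ := (hγ.periodic_K21clamped_mul hσL t (γ t)).exists_mem_Ico
    hγ.length_pos s (t - L / 2)
  have ratio := sep.abs_normalCoord_div_sqDist_le hγ.toIsArcLengthCurve hC
    (abs_zero.trans_lt sep.h₀_pos) (Set.Ico_subset_Icc_self hu)
  rw [normalPoint_zero] at ratio
  rw [value, abs_mul]
  refine mul_le_mul ((hγ.abs_K21clamped_le t _ u).trans ?_) (hS u) (abs_nonneg _) (by positivity)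
  rw [← sq_abs (_ / sqDist _ _ _)]
  gcongr

theorem tendsto_integral_K21clamped (hγ : IsSimpleClosedCurve γ L) (hσ : ContDiff ℝ 1 σ)
    (hσL : Function.Periodic σ L) (t : ℝ) (he : e ^ 2 = 1) :
    Tendsto (fun η => ∫ s in (0 : ℝ)..L, K21clamped γ t (normalPoint γ t (e * η)) s * σ s)
      (𝓝[>] 0)
      (𝓝 (e * (curv γ t * σ t) + ∫ s in (0 : ℝ)..L, K21clamped γ t (γ t) s * σ s)) := by
  obtain ⟨C, hC⟩ := hγ.exists_abs_curv_le
  obtain ⟨h₀, c, sep⟩ := hγ.exists_normalLineSeparated t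
  have centered (x : ℝ × ℝ) : ∫ s in (0 : ℝ)..L, K21clamped γ t x s * σ s =
      ∫ s in (t - L / 2)..(t - L / 2 + L), K21clamped γ t x s * σ s := by
    simpa using (hγ.periodic_K21clamped_mul hσL t x).intervalIntegral_add_eq 0 (t - L / 2)
  simp only [centered]
  have L_pos := hγ.length_pos
  exact sep.tendsto_integral_K21clamped hγ.toIsArcLengthCurve hC hσ (by linarith) (by linarith)
    (fun x => (hγ.periodic_boundaryTerm hσL t x _).symm) he

end IsSimpleClosedCurve

theorem stmt15_general (L : ℝ) (hL : 0 < L) (γ : ℝ → ℝ × ℝ)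
    (hγ : ContDiff ℝ 2 γ)
    (hper : ∀ s, γ (s + L) = γ s)
    (hinj : Set.InjOn γ (Set.Ico 0 L))
    (harc : ∀ s, dot2 (deriv γ s) (deriv γ s) = 1)
    (σ : ℝ → ℝ) (hσ : ContDiff ℝ 1 σ) (hσper : ∀ s, σ (s + L) = σ s)
    (t : ℝ) :
    ∃ h₀ > (0 : ℝ),
      (∀ h : ℝ, 0 < |h| → |h| < h₀ → ∀ s : ℝ, γ t + h • nor γ t ≠ γ s) ∧
      (∃ M : ℝ, ∀ s ∈ Set.Icc (0 : ℝ) L, |K21clamped γ t (γ t) s * σ s| ≤ M) ∧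
      Tendsto
        (fun h : ℝ => ∫ s in (0 : ℝ)..L, K21clamped γ t (γ t + h • nor γ t) s * σ s)
        (𝓝[>] (0 : ℝ))
        (𝓝 (curv γ t * σ t + ∫ s in (0 : ℝ)..L, K21clamped γ t (γ t) s * σ s)) ∧
      Tendsto
        (fun h : ℝ => ∫ s in (0 : ℝ)..L, K21clamped γ t (γ t + h • nor γ t) s * σ s)
        (𝓝[<] (0 : ℝ))
        (𝓝 (-(curv γ t) * σ t + ∫ s in (0 : ℝ)..L, K21clamped γ t (γ t) s * σ s)) := by
  have curve : IsSimpleClosedCurve γ L := ⟨⟨hγ, harc⟩, hL, hper, hinj⟩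
  obtain ⟨h₀, c, sep⟩ := curve.exists_normalLineSeparated t
  obtain ⟨M, hM⟩ := curve.exists_abs_K21clamped_mul_le hσ.continuous hσper t
  have outer := curve.tendsto_integral_K21clamped hσ hσper t (one_pow 2)
  have inner := (curve.tendsto_integral_K21clamped hσ hσper t neg_one_sq).comp
    (neg_zero (G := ℝ) ▸ tendsto_neg_nhdsLT (a := (0 : ℝ)))
  refine ⟨h₀, sep.h₀_pos, fun h h_pos hh => curve.normalPoint_ne sep (abs_pos.1 h_pos) hh,
    ⟨M, fun s _ => hM s⟩, ?_, ?_⟩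
  · simpa only [one_mul, normalPoint] using outer
  · simpa only [Function.comp_def, neg_mul, one_mul, neg_neg, normalPoint] using inner

theorem stmt15 (L : ℝ) (hL : 0 < L) (γ : ℝ → ℝ × ℝ)
    (hγ : ContDiff ℝ (⊤ : ℕ∞) γ)
    (hper : ∀ s, γ (s + L) = γ s)
    (hinj : Set.InjOn γ (Set.Ico 0 L))
    (harc : ∀ s, dot2 (deriv γ s) (deriv γ s) = 1)
    (σ : ℝ → ℝ) (hσ : ContDiff ℝ (⊤ : ℕ∞) σ) (hσper : ∀ s, σ (s + L) = σ s)
    (t : ℝ) :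
    ∃ h₀ > (0 : ℝ),
      (∀ h : ℝ, 0 < |h| → |h| < h₀ → ∀ s : ℝ, γ t + h • nor γ t ≠ γ s) ∧
      (∃ M : ℝ, ∀ s ∈ Set.Icc (0 : ℝ) L, |K21clamped γ t (γ t) s * σ s| ≤ M) ∧
      Tendsto
        (fun h : ℝ => ∫ s in (0 : ℝ)..L, K21clamped γ t (γ t + h • nor γ t) s * σ s)
        (𝓝[>] (0 : ℝ))
        (𝓝 (curv γ t * σ t + ∫ s in (0 : ℝ)..L, K21clamped γ t (γ t) s * σ s)) ∧
      Tendsto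
        (fun h : ℝ => ∫ s in (0 : ℝ)..L, K21clamped γ t (γ t + h • nor γ t) s * σ s)
        (𝓝[<] (0 : ℝ))
        (𝓝 (-(curv γ t) * σ t + ∫ s in (0 : ℝ)..L, K21clamped γ t (γ t) s * σ s)) :=
  stmt15_general L hL γ (contDiff_infty.1 hγ 2) hper hinj harc σ (contDiff_infty.1 hσ 1) hσper t
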